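/- arXiv:2209.05823 — 12 statements merged into one kernel-verified Lean document; each statement's English description precedes it below -/
import Mathlib

section
/- Let σ: S ↷ G be an algebraic action. Then the family 𝒞 of S-constructible subgroups satisfies: (i) 𝒞 is closed under finite intersections; (ii) if C ∈ 𝒞 and s ∈ S, then σ_s(C) ∈ 𝒞 and σ_s⁻¹(C) ∈ 𝒞; (iii) for all s ∈ S, g ∈ G and C ∈ 𝒞, the preimage σ_s⁻¹(gC) = {h ∈ G : σ_s(h) ∈ gC} is either empty or equal to h·σ_s⁻¹(C) for every h ∈ σ_s⁻¹(gC). -/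
open scoped Pointwise

/-- The family of `S`-constructible subgroups of `G` for an algebraic action
`σ : S ↷ G`: the smallest family of subgroups containing `G` and closed under
images and preimages of the endomorphisms `σ_s`. -/
inductive IsConstructible {S G : Type*} [Monoid S] [Group G]
    (σ : S →* Monoid.End G) : Subgroup G → Prop
  | top : IsConstructible σ ⊤
  | map : ∀ (s : S) (C : Subgroup G), IsConstructible σ C →
      IsConstructible σ (Subgroup.map (σ s) C)
  | comap : ∀ (s : S) (C : Subgroup G), IsConstructible σ C →
      IsConstructible σ (Subgroup.comap (σ s) C)

/-- Proposition 2.8 (prop:C): properties of the family of S-constructible subgroups. -/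
theorem constructible_subgroups_props {S G : Type*} [Monoid S] [Group G] [Nontrivial G]
    (σ : S →* Monoid.End G)
    (hinj : ∀ s : S, Function.Injective (σ s))
    (hfaith : Function.Injective σ) :
    -- (i) closed under finite intersections
    (∀ C D : Subgroup G, IsConstructible σ C → IsConstructible σ D →
        IsConstructible σ (C ⊓ D)) ∧
    -- (ii) closed under images and preimages under the σ_s
    (∀ (C : Subgroup G) (s : S), IsConstructible σ C →
        IsConstructible σ (Subgroup.map (σ s) C) ∧
        IsConstructible σ (Subgroup.comap (σ s) C)) ∧
    -- (iii) the preimage of a coset gC is empty or a coset h·σ_s⁻¹(C) for any h in it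
    (∀ (s : S) (g : G) (C : Subgroup G), IsConstructible σ C →
        ∀ h ∈ (σ s : G → G) ⁻¹' (g • (C : Set G)),
          (σ s : G → G) ⁻¹' (g • (C : Set G)) = h • ((σ s : G → G) ⁻¹' (C : Set G))) := by
  refine ⟨?_, fun C s hC => ⟨.map s C hC, .comap s C hC⟩, ?_⟩
  · intro C D hC hD
    induction hD generalizing C with
    | top => simpa using hC
    | map s D _ ih =>
      have h : C ⊓ Subgroup.map (σ s) D
          = Subgroup.map (σ s) (Subgroup.comap (σ s) C ⊓ D) := by
        ext x
        constructor
        · rintro ⟨hx, y, hy, rfl⟩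
          exact ⟨y, ⟨hx, hy⟩, rfl⟩
        · rintro ⟨y, ⟨hx, hy⟩, rfl⟩
          exact ⟨hx, y, hy, rfl⟩
      rw [h]
      exact .map s _ (ih _ (.comap s C hC))
    | comap s D _ ih =>
      have h : C ⊓ Subgroup.comap (σ s) D
          = Subgroup.comap (σ s) (Subgroup.map (σ s) C ⊓ D) := by
        ext x
        constructor
        · rintro ⟨hx, hy⟩
          exact ⟨⟨x, hx, rfl⟩, hy⟩
        · rintro ⟨⟨y, hy, hxy⟩, hx⟩
          have e : y = x := hinj s hxy
          subst e
          exact ⟨hy, hx⟩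
      rw [h]
      exact .comap s _ (ih _ (.map s C hC))
  · intro s g C _ h hh
    have hh' : g⁻¹ * σ s h ∈ C := by
      simpa [Set.mem_smul_set_iff_inv_smul_mem] using hh
    ext x
    simp only [Set.mem_preimage, Set.mem_smul_set_iff_inv_smul_mem, smul_eq_mul, map_mul,
      map_inv, SetLike.mem_coe]
    have e : g⁻¹ * σ s x = (g⁻¹ * σ s h) * ((σ s h)⁻¹ * σ s x) := by group
    rw [e]
    exact C.mul_mem_cancel_left hh'
end

section
/- If σ: S ↷ G is a non-automorphic algebraic action, then the idempotent elements of I (the φ ∈ I with φ ∘ φ = φ, equivalently the elements of I that are restrictions of the identity map of G) are exactly the identity maps id_{gC} on the S-constructible cosets gC (g ∈ G, C ∈ 𝒞) together with the empty partial bijection; that is, the idempotent semilattice of I is ℰ = {gC : g ∈ G, C ∈ 𝒞} ∪ {∅}. -/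
open scoped Pointwise

/- We model partial bijections of `G` by their graphs, i.e. subsets of `G × G`
that are graphs of injective partial functions; equality of graphs is exactly
equality of partial bijections. -/

/-- Graph of an everywhere-defined function. -/
def grph {G : Type*} (f : G → G) : Set (G × G) := {p | p.2 = f p.1}

/-- Composition `φ ∘ ψ` of partial bijections (apply `ψ` first), as graphs. -/
def rcomp {G : Type*} (φ ψ : Set (G × G)) : Set (G × G) :=
  {p | ∃ y, (p.1, y) ∈ ψ ∧ (y, p.2) ∈ φ}

/-- Inverse of a partial bijection, as graphs. -/
def rinv {G : Type*} (φ : Set (G × G)) : Set (G × G) := {p | (p.2, p.1) ∈ φ}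

/-- Domain of a partial bijection. -/
def rdom {G : Type*} (φ : Set (G × G)) : Set G := {x | ∃ y, (x, y) ∈ φ}

/-- The identity map on a subset `A ⊆ G`, as a graph. -/
def idOn {G : Type*} (A : Set G) : Set (G × G) := {p | p.1 = p.2 ∧ p.1 ∈ A}

/-- Membership in the inverse semigroup of partial bijections generated by a
set of generators: closure under composition and inversion. -/
inductive MemInvSemigroup {G : Type*} (gens : Set (Set (G × G))) : Set (G × G) → Prop
  | base : ∀ φ ∈ gens, MemInvSemigroup gens φ
  | comp : ∀ φ ψ, MemInvSemigroup gens φ → MemInvSemigroup gens ψ →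
      MemInvSemigroup gens (rcomp φ ψ)
  | inv : ∀ φ, MemInvSemigroup gens φ → MemInvSemigroup gens (rinv φ)

/-- The inverse semigroup `I` generated by the endomorphisms `σ_s` and the left
translations `t_g`. -/
def memI {S G : Type*} [Monoid S] [Group G] (σ : S →* Monoid.End G) :
    Set (G × G) → Prop :=
  MemInvSemigroup ({φ | ∃ s : S, φ = grph (σ s : G → G)} ∪
    {φ | ∃ g : G, φ = grph (fun h : G => g * h)})

def Ecoset {S G : Type*} [Monoid S] [Group G] (σ : S →* Monoid.End G) (A : Set G) : Prop :=
  A = ∅ ∨ ∃ (g : G) (C : Subgroup G), IsConstructible σ C ∧ A = g • (C : Set G)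

def rimg {G : Type*} (φ : Set (G × G)) (A : Set G) : Set G := {y | ∃ x ∈ A, (x, y) ∈ φ}

theorem rimg_comp {G : Type*} (φ ψ : Set (G × G)) (A : Set G) :
    rimg (rcomp φ ψ) A = rimg φ (rimg ψ A) := by
  ext y
  simp only [rimg, rcomp, Set.mem_ofPred_eq]
  constructor
  · rintro ⟨x, hx, z, h1, h2⟩
    exact ⟨z, ⟨x, hx, h1⟩, h2⟩
  · rintro ⟨z, ⟨x, hx, h1⟩, h2⟩
    exact ⟨x, hx, z, h1, h2⟩

theorem rinv_comp {G : Type*} (φ ψ : Set (G × G)) :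
    rinv (rcomp φ ψ) = rcomp (rinv ψ) (rinv φ) := by
  ext p
  simp only [rinv, rcomp, Set.mem_ofPred_eq]
  constructor
  · rintro ⟨y, h1, h2⟩
    exact ⟨y, h2, h1⟩
  · rintro ⟨y, h1, h2⟩
    exact ⟨y, h2, h1⟩

theorem rinv_rinv {G : Type*} (φ : Set (G × G)) : rinv (rinv φ) = φ := rfl

structure GoodRel {S G : Type*} [Monoid S] [Group G] (σ : S →* Monoid.End G)
    (φ : Set (G × G)) : Prop where
  func : ∀ x y z, (x, y) ∈ φ → (x, z) ∈ φ → y = z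
  inj : ∀ x y z, (x, z) ∈ φ → (y, z) ∈ φ → x = y
  img : ∀ A, Ecoset σ A → Ecoset σ (rimg φ A)
  pre : ∀ A, Ecoset σ A → Ecoset σ (rimg (rinv φ) A)

theorem Ecoset.trans {S G : Type*} [Monoid S] [Group G] {σ : S →* Monoid.End G} {A : Set G}
    (h : Ecoset σ A) (g : G) : Ecoset σ (g • A) := by
  rcases h with rfl | ⟨k, C, hC, rfl⟩
  · left; simp
  · right; exact ⟨g * k, C, hC, by rw [mul_smul]⟩

theorem good_of_mem {S G : Type*} [Monoid S] [Group G] (σ : S →* Monoid.End G)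
    (hinj : ∀ s : S, Function.Injective (σ s)) (φ : Set (G × G)) (h : memI σ φ) :
    GoodRel σ φ := by
  unfold memI at h
  induction h with
  | base φ h =>
    rcases h with ⟨s, rfl⟩ | ⟨g, rfl⟩
    · refine ⟨?_, ?_, ?_, ?_⟩
      · intro x y z h1 h2
        simp only [grph, Set.mem_ofPred_eq] at h1 h2
        rw [h1, h2]
      · intro x y z h1 h2
        simp only [grph, Set.mem_ofPred_eq] at h1 h2
        exact hinj s (h1.symm.trans h2)
      · rintro A (rfl | ⟨g, C, hC, rfl⟩)
        · left; simp [rimg]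
        · right
          refine ⟨σ s g, _, IsConstructible.map s C hC, ?_⟩
          ext y
          simp only [rimg, grph, Set.mem_ofPred_eq, Set.mem_smul_set, SetLike.mem_coe,
            smul_eq_mul]
          constructor
          · rintro ⟨_, ⟨c, hc, rfl⟩, rfl⟩
            exact ⟨_, ⟨c, hc, rfl⟩, (map_mul (σ s) g c).symm⟩
          · rintro ⟨_, ⟨c, hc, rfl⟩, rfl⟩
            exact ⟨_, ⟨c, hc, rfl⟩, (map_mul (σ s) g c).symm⟩
      · rintro A (rfl | ⟨g, C, hC, rfl⟩)
        · left; simp [rimg]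
        · rcases Set.eq_empty_or_nonempty (rimg (rinv (grph (σ s : G → G))) (g • (C : Set G)))
            with h | ⟨k, hk⟩
          · exact Or.inl h
          · right
            refine ⟨k, _, IsConstructible.comap s C hC, ?_⟩
            have key : ∀ y, y ∈ rimg (rinv (grph (σ s : G → G))) (g • (C : Set G)) ↔
                g⁻¹ * σ s y ∈ C := by
              intro y
              simp only [rimg, rinv, grph, Set.mem_ofPred_eq, Set.mem_smul_set_iff_inv_smul_mem,
                SetLike.mem_coe, smul_eq_mul, exists_eq_right]
            rw [key] at hk
            ext y
            rw [key, Set.mem_smul_set_iff_inv_smul_mem, smul_eq_mul]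
            change _ ↔ σ s (k⁻¹ * y) ∈ C
            rw [map_mul, map_inv]
            have e : g⁻¹ * σ s y = (g⁻¹ * σ s k) * ((σ s k)⁻¹ * σ s y) := by group
            rw [e]
            exact C.mul_mem_cancel_left hk
    · refine ⟨?_, ?_, ?_, ?_⟩
      · intro x y z h1 h2
        simp only [grph, Set.mem_ofPred_eq] at h1 h2
        rw [h1, h2]
      · intro x y z h1 h2
        simp only [grph, Set.mem_ofPred_eq] at h1 h2
        exact mul_left_cancel (h1.symm.trans h2)
      · intro A hA
        have e : rimg (grph (fun h : G => g * h)) A = g • A := by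
          ext y
          simp only [rimg, grph, Set.mem_ofPred_eq, Set.mem_smul_set, smul_eq_mul, eq_comm]
        rw [e]
        exact hA.trans g
      · intro A hA
        have e : rimg (rinv (grph (fun h : G => g * h))) A = g⁻¹ • A := by
          ext y
          simp only [rimg, rinv, grph, Set.mem_ofPred_eq, Set.mem_smul_set_iff_inv_smul_mem,
            smul_eq_mul, exists_eq_right, inv_inv]
        rw [e]
        exact hA.trans g⁻¹
  | comp φ ψ _ _ h1 h2 =>
    refine ⟨?_, ?_, ?_, ?_⟩
    · rintro x y z ⟨a, ha, ha'⟩ ⟨b, hb, hb'⟩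
      obtain rfl := h2.func _ _ _ ha hb
      exact h1.func _ _ _ ha' hb'
    · rintro x y z ⟨a, ha, ha'⟩ ⟨b, hb, hb'⟩
      obtain rfl := h1.inj _ _ _ ha' hb'
      exact h2.inj _ _ _ ha hb
    · intro A hA
      rw [rimg_comp]
      exact h1.img _ (h2.img _ hA)
    · intro A hA
      rw [rinv_comp, rimg_comp]
      exact h2.pre _ (h1.pre _ hA)
  | inv φ _ h =>
    exact ⟨fun x y z h1 h2 => h.inj _ _ _ h1 h2, fun x y z h1 h2 => h.func _ _ _ h1 h2,
      h.pre, h.img⟩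

theorem memI_sigma {S G : Type*} [Monoid S] [Group G] (σ : S →* Monoid.End G) (s : S) :
    memI σ (grph (σ s : G → G)) := MemInvSemigroup.base _ (Or.inl ⟨s, rfl⟩)

theorem memI_trans {S G : Type*} [Monoid S] [Group G] (σ : S →* Monoid.End G) (g : G) :
    memI σ (grph (fun h : G => g * h)) := MemInvSemigroup.base _ (Or.inr ⟨g, rfl⟩)

theorem conj_eq {G : Type*} (f : G → G) (A : Set G) :
    rcomp (grph f) (rcomp (idOn A) (rinv (grph f))) = idOn (f '' A) := by
  ext ⟨x, y⟩
  simp only [rcomp, rinv, grph, idOn, Set.mem_ofPred_eq, Set.mem_image]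
  constructor
  · rintro ⟨a, ⟨b, rfl, rfl, hb⟩, rfl⟩
    exact ⟨rfl, b, hb, rfl⟩
  · rintro ⟨rfl, b, hb, rfl⟩
    exact ⟨b, ⟨b, rfl, rfl, hb⟩, rfl⟩

theorem conj_inv_eq {G : Type*} (f : G → G) (hf : Function.Injective f) (A : Set G) :
    rcomp (rinv (grph f)) (rcomp (idOn A) (grph f)) = idOn (f ⁻¹' A) := by
  ext ⟨x, y⟩
  simp only [rcomp, rinv, grph, idOn, Set.mem_ofPred_eq, Set.mem_preimage]
  constructor
  · rintro ⟨a, ⟨b, rfl, h, hb⟩, h'⟩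
    exact ⟨hf (h.trans h'), hb⟩
  · rintro ⟨rfl, hb⟩
    exact ⟨f x, ⟨f x, rfl, rfl, hb⟩, rfl⟩

theorem memI_idOn {S G : Type*} [Monoid S] [Group G] (σ : S →* Monoid.End G)
    (hinj : ∀ s : S, Function.Injective (σ s)) (C : Subgroup G) (hC : IsConstructible σ C) :
    memI σ (idOn (C : Set G)) := by
  induction hC with
  | top =>
    have : idOn ((⊤ : Subgroup G) : Set G) = grph (fun h : G => 1 * h) := by
      ext ⟨x, y⟩
      simp [idOn, grph, eq_comm]
    rw [this]
    exact memI_trans σ 1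
  | map s C _ ih =>
    have := conj_eq (σ s : G → G) (C : Set G)
    change memI σ (idOn ((σ s : G → G) '' (C : Set G)))
    rw [← this]
    exact .comp _ _ (memI_sigma σ s) (.comp _ _ ih (.inv _ (memI_sigma σ s)))
  | comap s C _ ih =>
    have := conj_inv_eq (σ s : G → G) (hinj s) (C : Set G)
    change memI σ (idOn ((σ s : G → G) ⁻¹' (C : Set G)))
    rw [← this]
    exact .comp _ _ (.inv _ (memI_sigma σ s)) (.comp _ _ ih (memI_sigma σ s))

/-- The idempotents of `I` are exactly the identity maps on the `S`-constructible
cosets, together with the empty partial bijection. -/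
theorem idempotents_of_I {S G : Type*} [Monoid S] [Group G] [Nontrivial G]
    (σ : S →* Monoid.End G)
    (hinj : ∀ s : S, Function.Injective (σ s))
    (hfaith : Function.Injective σ)
    (hna : ∃ s : S, Set.range (σ s : G → G) ≠ Set.univ) :
    {φ : Set (G × G) | memI σ φ ∧ rcomp φ φ = φ} =
      {φ : Set (G × G) | φ = (∅ : Set (G × G)) ∨
        ∃ (g : G) (C : Subgroup G), IsConstructible σ C ∧ φ = idOn (g • (C : Set G))} := by
  ext φ
  simp only [Set.mem_ofPred_eq]
  constructor
  · rintro ⟨hm, hid⟩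
    have hg := good_of_mem σ hinj φ hm
    have hd : ∀ x y, (x, y) ∈ φ → x = y := by
      intro x y hxy
      have h := hxy
      rw [← hid] at h
      obtain ⟨z, h1, h2⟩ := h
      obtain rfl := hg.func _ _ _ hxy h1
      exact hg.inj _ _ _ hxy h2
    have he : φ = idOn (rimg φ Set.univ) := by
      ext ⟨x, y⟩
      simp only [idOn, rimg, Set.mem_ofPred_eq, Set.mem_univ, true_and]
      constructor
      · intro h
        obtain rfl := hd _ _ h
        exact ⟨rfl, _, h⟩
      · rintro ⟨rfl, z, h⟩
        obtain rfl := hd _ _ h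
        exact h
    have hE : Ecoset σ (Set.univ : Set G) := Or.inr ⟨1, ⊤, .top, by simp⟩
    rcases hg.img _ hE with h | ⟨g, C, hC, h⟩
    · left
      rw [he, h]
      simp [idOn]
    · right
      refine ⟨g, C, hC, ?_⟩
      rw [← h]
      exact he
  · rintro (rfl | ⟨g, C, hC, rfl⟩)
    · refine ⟨?_, by simp [rcomp]⟩
      obtain ⟨s, hs⟩ := hna
      obtain ⟨g, hg⟩ := (Set.ne_univ_iff_exists_notMem _).1 hs
      have : rcomp (rinv (grph (σ s : G → G)))
          (rcomp (grph (fun h : G => g * h)) (grph (σ s : G → G))) = ∅ := by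
        ext ⟨x, y⟩
        simp only [rcomp, rinv, grph, Set.mem_ofPred_eq, Set.mem_empty_iff_false, iff_false]
        rintro ⟨_, ⟨_, rfl, rfl⟩, h⟩
        apply hg
        refine ⟨y * x⁻¹, ?_⟩
        rw [map_mul, map_inv, ← h]
        group
      rw [← this]
      exact .comp _ _ (.inv _ (memI_sigma σ s)) (.comp _ _ (memI_trans σ g) (memI_sigma σ s))
    · constructor
      · have := conj_eq (fun h : G => g * h) (C : Set G)
        change memI σ (idOn ((fun h : G => g * h) '' (C : Set G)))
        rw [← this]
        exact .comp _ _ (memI_trans σ g)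
          (.comp _ _ (memI_idOn σ hinj C hC) (.inv _ (memI_trans σ g)))
      · ext ⟨x, y⟩
        simp only [rcomp, idOn, Set.mem_ofPred_eq]
        constructor
        · rintro ⟨_, ⟨rfl, h⟩, rfl, _⟩
          exact ⟨rfl, h⟩
        · rintro ⟨rfl, h⟩
          exact ⟨x, ⟨rfl, h⟩, rfl, h⟩
end

section
/- Let σ: S ↷ G be an algebraic action. (i) For φ ∈ I, one has φ ∈ I^e if and only if e ∈ dom(φ) and φ(e) = e. (ii) Every φ ∈ I with nonempty domain is of the form φ = t_h ∘ ψ ∘ t_{g⁻¹} for some ψ ∈ I^e and g, h ∈ G; more precisely, if dom(φ) = gC for some g ∈ G and C ∈ 𝒞, and h := φ(g), then ψ := t_{h⁻¹} ∘ φ ∘ t_g belongs to I^e. -/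
open scoped Pointwise

/-- The inverse semigroup `I^e` generated by the endomorphisms `σ_s` alone. -/
def memIe {S G : Type*} [Monoid S] [Group G] (σ : S →* Monoid.End G) :
    Set (G × G) → Prop :=
  MemInvSemigroup {φ | ∃ s : S, φ = grph (σ s : G → G)}

def cnj {G : Type*} [Group G] (φ : Set (G × G)) (g h : G) : Set (G × G) :=
  {p | (g * p.1, h * p.2) ∈ φ}

theorem cnj_mem {S G : Type*} [Monoid S] [Group G] (σ : S →* Monoid.End G)
    (φ : Set (G × G)) (hφ : memI σ φ) :
    ∀ g h : G, (g, h) ∈ φ → memIe σ (cnj φ g h) := by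
  unfold memI at hφ
  induction hφ with
  | base φ hm =>
    intro g h hgh
    rcases hm with ⟨s, rfl⟩ | ⟨k, rfl⟩
    · refine MemInvSemigroup.base _ ⟨s, ?_⟩
      have hh : h = σ s g := hgh
      subst hh
      ext ⟨x, y⟩
      change σ s g * y = σ s (g * x) ↔ y = σ s x
      rw [map_mul, mul_right_inj]
    · refine MemInvSemigroup.base _ ⟨1, ?_⟩
      have hh : h = k * g := hgh
      subst hh
      ext ⟨x, y⟩
      rw [map_one]
      change k * g * y = k * (g * x) ↔ y = x
      rw [mul_assoc, mul_right_inj, mul_right_inj]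
  | comp φ ψ _ _ ih1 ih2 =>
    rintro g h ⟨y, h1, h2⟩
    have : memIe σ _ := MemInvSemigroup.comp _ _ (ih1 y h h2) (ih2 g y h1)
    convert this using 1
    ext ⟨a, b⟩
    constructor
    · rintro ⟨z, h3, h4⟩
      refine ⟨y⁻¹ * z, ?_, ?_⟩
      · change (g * a, y * (y⁻¹ * z)) ∈ ψ
        rwa [mul_inv_cancel_left]
      · change (y * (y⁻¹ * z), h * b) ∈ φ
        rwa [mul_inv_cancel_left]
    · rintro ⟨z, h3, h4⟩
      exact ⟨y * z, h3, h4⟩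
  | inv φ _ ih =>
    intro g h hgh
    exact MemInvSemigroup.inv _ (ih h g hgh)

theorem one_mem_Ie {S G : Type*} [Monoid S] [Group G] (σ : S →* Monoid.End G)
    (φ : Set (G × G)) (hφ : memIe σ φ) : ((1 : G), (1 : G)) ∈ φ := by
  unfold memIe at hφ
  induction hφ with
  | base φ hm =>
    obtain ⟨s, rfl⟩ := hm
    exact (map_one (σ s)).symm
  | comp φ ψ _ _ ih1 ih2 => exact ⟨1, ih2, ih1⟩
  | inv φ _ ih => exact ih

/-- Proposition 2.11 (prop:stform), standard form for elements of `I`: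
(i) for `φ ∈ I`, `φ ∈ I^e` iff `e ∈ dom(φ)` and `φ(e) = e`;
(ii) every `φ ∈ I` with nonempty domain has the form `t_h ∘ ψ ∘ t_{g⁻¹}` with
`ψ ∈ I^e`; more precisely, if `dom(φ) = gC` with `C ∈ 𝒞` and `φ(g) = h`, then
`t_{h⁻¹} ∘ φ ∘ t_g ∈ I^e`. -/
theorem standard_form {S G : Type*} [Monoid S] [Group G] [Nontrivial G]
    (σ : S →* Monoid.End G)
    (hinj : ∀ s : S, Function.Injective (σ s))
    (hfaith : Function.Injective σ) :
    (∀ φ : Set (G × G), memI σ φ → (memIe σ φ ↔ ((1 : G), (1 : G)) ∈ φ)) ∧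
    (∀ φ : Set (G × G), memI σ φ → (rdom φ).Nonempty →
      ∃ (g h : G) (ψ : Set (G × G)), memIe σ ψ ∧
        φ = rcomp (grph (fun x : G => h * x))
              (rcomp ψ (grph (fun x : G => g⁻¹ * x)))) ∧
    (∀ φ : Set (G × G), memI σ φ → ∀ (g h : G) (C : Subgroup G), IsConstructible σ C →
      rdom φ = g • (C : Set G) → (g, h) ∈ φ →
      memIe σ (rcomp (grph (fun x : G => h⁻¹ * x))
        (rcomp φ (grph (fun x : G => g * x))))) := by
  refine ⟨fun φ hφ => ⟨one_mem_Ie σ φ, fun h => ?_⟩, ?_, ?_⟩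
  · have := cnj_mem σ φ hφ 1 1 h
    simpa [cnj] using this
  · rintro φ hφ ⟨g, h, hgh⟩
    refine ⟨g, h, cnj φ g h, cnj_mem σ φ hφ g h hgh, ?_⟩
    ext ⟨a, b⟩
    constructor
    · intro hab
      refine ⟨h⁻¹ * b, ⟨g⁻¹ * a, rfl, ?_⟩, ?_⟩
      · change (g * (g⁻¹ * a), h * (h⁻¹ * b)) ∈ φ
        rwa [mul_inv_cancel_left, mul_inv_cancel_left]
      · exact (mul_inv_cancel_left h b).symm
    · rintro ⟨y, ⟨z, hz, hy⟩, hb⟩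
      have hz' : z = g⁻¹ * a := hz
      have hb' : b = h * y := hb
      subst hz' hb'
      have hy' : (g * (g⁻¹ * a), h * y) ∈ φ := hy
      rwa [mul_inv_cancel_left] at hy'
  · intro φ hφ g h C _ _ hgh
    convert cnj_mem σ φ hφ g h hgh using 1
    ext ⟨a, b⟩
    constructor
    · rintro ⟨y, ⟨z, hz, hy⟩, hb⟩
      have hz' : z = g * a := hz
      have hb' : b = h⁻¹ * y := hb
      subst hz' hb'
      change (g * a, h * (h⁻¹ * y)) ∈ φ
      rwa [mul_inv_cancel_left]
    · intro hab
      exact ⟨h * b, ⟨g * a, rfl, hab⟩, (inv_mul_cancel_left h b).symm⟩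
end

section
/- Let σ: S ↷ G be an algebraic action. Then I is 0-E-unitary if and only if I^e is E-unitary. Explicitly: the condition that every φ ∈ I, for which there exists a nonempty S-constructible coset kD with kD ⊆ dom(φ) and φ|_{kD} = id_{kD}, satisfies φ = id_{dom(φ)}, holds if and only if every φ ∈ I^e, for which there exists C ∈ 𝒞 with C ⊆ dom(φ) and φ|_C = id_C, satisfies φ = id_{dom(φ)}. -/
open scoped Pointwise

theorem key_aux {S G : Type*} [Monoid S] [Group G] (σ : S →* Monoid.End G)
    (φ : Set (G × G)) (h : memI σ φ) :
    ∃ ψ, memIe σ ψ ∧ ∀ a b, (a, b) ∈ φ → ∀ x y, (x, y) ∈ φ ↔ (a⁻¹ * x, b⁻¹ * y) ∈ ψ := by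
  unfold memI at h
  induction h with
  | base φ hφ =>
    rcases hφ with ⟨s, rfl⟩ | ⟨g, rfl⟩
    · refine ⟨_, MemInvSemigroup.base _ ⟨s, rfl⟩, ?_⟩
      intro a b hab x y
      simp only [grph, Set.mem_setOf_eq] at hab ⊢
      subst hab
      simp
    · refine ⟨_, MemInvSemigroup.base _ ⟨1, rfl⟩, ?_⟩
      intro a b hab x y
      simp only [grph, Set.mem_setOf_eq] at hab ⊢
      subst hab
      rw [map_one]
      change _ ↔ (g * a)⁻¹ * y = a⁻¹ * x
      constructor
      · rintro rfl
        group
      · intro h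
        rw [inv_mul_eq_iff_eq_mul] at h
        rw [h]
        group
  | comp φ₁ φ₂ _ _ ih₁ ih₂ =>
    obtain ⟨ψ₁, h₁, k₁⟩ := ih₁
    obtain ⟨ψ₂, h₂, k₂⟩ := ih₂
    refine ⟨_, MemInvSemigroup.comp _ _ h₁ h₂, ?_⟩
    rintro a c ⟨b, hab, hbc⟩ x z
    constructor
    · rintro ⟨y, hxy, hyz⟩
      exact ⟨b⁻¹ * y, (k₂ _ _ hab _ _).1 hxy, (k₁ _ _ hbc _ _).1 hyz⟩
    · rintro ⟨y, hxy, hyz⟩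
      refine ⟨b * y, (k₂ _ _ hab _ _).2 ?_, (k₁ _ _ hbc _ _).2 ?_⟩
      · simpa using hxy
      · simpa using hyz
  | inv φ _ ih =>
    obtain ⟨ψ, h, k⟩ := ih
    exact ⟨_, MemInvSemigroup.inv _ h, fun a b hab x y => k b a hab y x⟩

theorem memIe_memI {S G : Type*} [Monoid S] [Group G] (σ : S →* Monoid.End G)
    (φ : Set (G × G)) (h : memIe σ φ) : memI σ φ := by
  unfold memIe at h
  induction h with
  | base φ hφ => exact MemInvSemigroup.base _ (Or.inl hφ)
  | comp φ ψ _ _ h₁ h₂ => exact MemInvSemigroup.comp _ _ h₁ h₂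
  | inv φ _ h => exact MemInvSemigroup.inv _ h

/-- Corollary 2.12 (cor:0Eunitary): `I` is 0-E-unitary if and only if `I^e` is
E-unitary. Here `I` is 0-E-unitary means: any `φ ∈ I` which restricts to the
identity on some nonempty constructible coset `kD` is the identity on its
domain; `I^e` is E-unitary means the analogous statement for `φ ∈ I^e` and
constructible subgroups `C ∈ 𝒞`. -/
theorem zero_E_unitary_iff_E_unitary {S G : Type*} [Monoid S] [Group G] [Nontrivial G]
    (σ : S →* Monoid.End G)
    (hinj : ∀ s : S, Function.Injective (σ s))
    (hfaith : Function.Injective σ) :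
    (∀ φ : Set (G × G), memI σ φ →
        (∃ (k : G) (D : Subgroup G), IsConstructible σ D ∧ idOn (k • (D : Set G)) ⊆ φ) →
        φ = idOn (rdom φ)) ↔
      (∀ φ : Set (G × G), memIe σ φ →
        (∃ C : Subgroup G, IsConstructible σ C ∧ idOn ((C : Subgroup G) : Set G) ⊆ φ) →
        φ = idOn (rdom φ)) := by
  constructor
  · rintro H φ hφ ⟨C, hC, hid⟩
    exact H φ (memIe_memI σ φ hφ) ⟨1, C, hC, by simpa using hid⟩
  · rintro H φ hφ ⟨k, D, hD, hid⟩
    obtain ⟨ψ, hψ, key⟩ := key_aux σ φ hφ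
    have hmem : ∀ d ∈ D, (k * d, k * d) ∈ φ := fun d hd =>
      hid ⟨rfl, Set.mem_smul_set.2 ⟨d, hd, rfl⟩⟩
    have hkk : (k, k) ∈ φ := by simpa using hmem 1 D.one_mem
    have hψid : ψ = idOn (rdom ψ) := by
      refine H ψ hψ ⟨D, hD, ?_⟩
      rintro ⟨x, y⟩ ⟨hxy, hx⟩
      change x = y at hxy
      subst hxy
      simpa using (key k k hkk _ _).1 (hmem x hx)
    have hφid : ∀ x y, (x, y) ∈ φ → x = y := by
      intro x y hxy
      have h1 := (key k k hkk _ _).1 hxy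
      rw [hψid] at h1
      exact mul_left_cancel h1.1
    ext ⟨x, y⟩
    constructor
    · intro h
      exact ⟨hφid x y h, y, h⟩
    · rintro ⟨hxy, z, hz⟩
      change x = y at hxy
      change (x, z) ∈ φ at hz
      have := hφid x z hz
      subst hxy
      rw [← this] at hz
      exact hz
end

section
/- Let σ: S ↷ G be a non-automorphic algebraic action and let φ ∈ I have nonempty domain. A finite collection 𝔠 = {h₁D₁, …, h_nD_n} ⊆ ℰ× is an outer cover of 𝒥_φ if and only if ∪𝒥_φ ⊆ h₁D₁ ∪ ⋯ ∪ h_nD_n. In particular, a finite collection 𝔠 = {h₁D₁, …, h_nD_n} ⊆ ℰ× is a cover of the S-constructible coset gC if and only if gC = h₁D₁ ∪ ⋯ ∪ h_nD_n. -/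
open scoped Pointwise

/-- The fixed-point set of a partial bijection. -/
def fixSet {G : Type*} (φ : Set (G × G)) : Set G := {x | (x, x) ∈ φ}

theorem isConstructible_inf {S G : Type*} [Monoid S] [Group G]
    (σ : S →* Monoid.End G) (hinj : ∀ s : S, Function.Injective (σ s))
    {C : Subgroup G} (hC : IsConstructible σ C) :
    ∀ D : Subgroup G, IsConstructible σ D → IsConstructible σ (C ⊓ D) := by
  induction hC with
  | top => intro D hD; simpa using hD
  | map s C _ ih =>
    intro D hD
    have h := IsConstructible.map s _ (ih _ (IsConstructible.comap s D hD))
    convert h using 1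
    ext x
    simp only [Subgroup.mem_inf, Subgroup.mem_map, Subgroup.mem_comap]
    constructor
    · rintro ⟨⟨y, hy, rfl⟩, hx⟩
      exact ⟨y, ⟨hy, hx⟩, rfl⟩
    · rintro ⟨y, ⟨hy, hx⟩, rfl⟩
      exact ⟨⟨y, hy, rfl⟩, hx⟩
  | comap s C _ ih =>
    intro D hD
    have h := IsConstructible.comap s _ (ih _ (IsConstructible.map s D hD))
    convert h using 1
    ext x
    simp only [Subgroup.mem_inf, Subgroup.mem_map, Subgroup.mem_comap]
    constructor
    · rintro ⟨h1, h2⟩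
      exact ⟨h1, x, h2, rfl⟩
    · rintro ⟨h1, y, h2, h3⟩
      exact ⟨h1, hinj s h3 ▸ h2⟩

theorem exists_small {S G : Type*} [Monoid S] [Group G]
    (σ : S →* Monoid.End G) (hinj : ∀ s : S, Function.Injective (σ s))
    (C : Subgroup G) (hC : IsConstructible σ C) (n : ℕ) (D : Fin n → Subgroup G)
    (hD : ∀ i, IsConstructible σ (D i)) :
    ∃ C' : Subgroup G, IsConstructible σ C' ∧ C' ≤ C ∧ ∀ i, C' ≤ D i := by
  induction n with
  | zero => exact ⟨C, hC, le_rfl, fun i => i.elim0⟩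
  | succ n ih =>
    obtain ⟨C', h1, h2, h3⟩ := ih (fun i => D i.succ) (fun i => hD _)
    refine ⟨C' ⊓ D 0, isConstructible_inf σ hinj h1 _ (hD 0), inf_le_left.trans h2, ?_⟩
    intro i
    refine Fin.cases inf_le_right (fun j => inf_le_left.trans (h3 j)) i

theorem outer_aux {S G : Type*} [Monoid S] [Group G]
    (σ : S →* Monoid.End G) (hinj : ∀ s : S, Function.Injective (σ s))
    (F : Set G) (n : ℕ) (h : Fin n → G) (D : Fin n → Subgroup G)
    (hD : ∀ i, IsConstructible σ (D i))
    (H : ∀ (g : G) (C : Subgroup G), IsConstructible σ C →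
          g • (C : Set G) ⊆ F →
          ∃ i, ((h i • (D i : Set G)) ∩ (g • (C : Set G))).Nonempty)
    (g : G) (C : Subgroup G) (hC : IsConstructible σ C) (hF : g • (C : Set G) ⊆ F) :
    g • (C : Set G) ⊆ ⋃ i, h i • (D i : Set G) := by
  rintro _ ⟨c, hc, rfl⟩
  obtain ⟨C', h1, h2, h3⟩ := exists_small σ hinj C hC n D hD
  obtain ⟨i, y, ⟨d, hd, hdy⟩, ⟨c', hc', hcy⟩⟩ := H (g * c) C' h1 (by
    rintro _ ⟨c', hc', rfl⟩
    exact hF ⟨c * c', C.mul_mem hc (h2 hc'), by simp [mul_assoc]⟩)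
  simp only [smul_eq_mul] at hdy hcy
  refine Set.mem_iUnion.2 ⟨i, d * c'⁻¹, (D i).mul_mem hd ((D i).inv_mem (h3 i hc')), ?_⟩
  simp only [smul_eq_mul]
  rw [← mul_assoc, hdy, ← hcy]
  group

theorem meets_aux {G : Type*} [Group G] (n : ℕ) (h : Fin n → G) (D : Fin n → Subgroup G)
    (g : G) (C : Subgroup G) (H : g • (C : Set G) ⊆ ⋃ i, h i • (D i : Set G)) :
    ∃ i, ((h i • (D i : Set G)) ∩ (g • (C : Set G))).Nonempty := by
  have hg : g ∈ g • (C : Set G) := ⟨1, C.one_mem, by simp⟩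
  obtain ⟨i, hi⟩ := Set.mem_iUnion.1 (H hg)
  exact ⟨i, g, hi, hg⟩

/-- Lemma 3.3 (lem:covers=unions): for `φ ∈ I` with nonempty domain, a finite
collection `{hᵢDᵢ} ⊆ ℰ×` is an outer cover of `𝒥_φ` iff `∪𝒥_φ ⊆ ⋃ᵢ hᵢDᵢ`;
in particular, it is a cover of a constructible coset `gC` iff `gC = ⋃ᵢ hᵢDᵢ`. -/
theorem covers_eq_unions {S G : Type*} [Monoid S] [Group G] [Nontrivial G]
    (σ : S →* Monoid.End G)
    (hinj : ∀ s : S, Function.Injective (σ s))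
    (hfaith : Function.Injective σ)
    (hna : ∃ s : S, Set.range (σ s : G → G) ≠ Set.univ) :
    -- outer covers of 𝒥_φ
    (∀ φ : Set (G × G), memI σ φ → (rdom φ).Nonempty →
      ∀ (n : ℕ) (h : Fin n → G) (D : Fin n → Subgroup G),
        (∀ i, IsConstructible σ (D i)) →
      ((∀ (g : G) (C : Subgroup G), IsConstructible σ C →
          g • (C : Set G) ⊆ fixSet φ →
          ∃ i, ((h i • (D i : Set G)) ∩ (g • (C : Set G))).Nonempty) ↔
        ⋃₀ {E : Set G | ∃ (g : G) (C : Subgroup G), IsConstructible σ C ∧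
            E = g • (C : Set G) ∧ E ⊆ fixSet φ} ⊆ ⋃ i, h i • (D i : Set G))) ∧
    -- covers of a constructible coset gC
    (∀ (g : G) (C : Subgroup G), IsConstructible σ C →
      ∀ (n : ℕ) (h : Fin n → G) (D : Fin n → Subgroup G),
        (∀ i, IsConstructible σ (D i)) →
      (((∀ i, h i • (D i : Set G) ⊆ g • (C : Set G)) ∧
        (∀ (g' : G) (C' : Subgroup G), IsConstructible σ C' →
          g' • (C' : Set G) ⊆ g • (C : Set G) →
          ∃ i, ((h i • (D i : Set G)) ∩ (g' • (C' : Set G))).Nonempty)) ↔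
        g • (C : Set G) = ⋃ i, h i • (D i : Set G))) := by
  refine ⟨?_, ?_⟩
  · intro φ _ _ n h D hD
    constructor
    · intro H
      apply Set.sUnion_subset
      rintro _ ⟨g, C, hC, rfl, hF⟩
      exact outer_aux σ hinj _ n h D hD H g C hC hF
    · intro H g C hC hF
      exact meets_aux n h D g C
        (fun x hx => H (Set.mem_sUnion.2 ⟨_, ⟨g, C, hC, rfl, hF⟩, hx⟩))
  · intro g C hC n h D hD
    constructor
    · rintro ⟨H1, H2⟩
      exact Set.Subset.antisymm (outer_aux σ hinj _ n h D hD H2 g C hC subset_rfl)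
        (Set.iUnion_subset H1)
    · intro H
      refine ⟨fun i => H ▸ Set.subset_iUnion (fun i => h i • (D i : Set G)) i, ?_⟩
      intro g' C' _ hs
      exact meets_aux n h D g' C' (hs.trans H.subset)
end

section
/- Let σ: S ↷ G be a non-automorphic algebraic action. Given 𝔛 ⊆ ∂Ê and ω ∈ ∂Ê, one has that ω lies in the closure of the set {t_k.χ : k ∈ G, χ ∈ 𝔛} if and only if 𝔉(ω) ⊆ ⋃_{χ ∈ 𝔛} 𝔉(χ). -/
open scoped Pointwise

/-- The semilattice `ℰ` of `S`-constructible cosets together with `∅`. -/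
def ECoset {S G : Type*} [Monoid S] [Group G] (σ : S →* Monoid.End G) : Set (Set G) :=
  {E | E = ∅ ∨ ∃ (g : G) (C : Subgroup G), IsConstructible σ C ∧ E = g • (C : Set G)}

/-- A character of `ℰ`: multiplicative, sends `∅` to `0` and `G` to `1`.
(We represent characters as Boolean functions on `Set G`, pinned to `false`
outside `ℰ`, so that equality of characters is equality of functions and the
topology of pointwise convergence is the product topology.) -/
def IsChar {S G : Type*} [Monoid S] [Group G] (σ : S →* Monoid.End G)
    (χ : Set G → Bool) : Prop :=
  χ ∅ = false ∧ χ Set.univ = true ∧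
  (∀ E F : Set G, E ∈ ECoset σ → F ∈ ECoset σ → χ (E ∩ F) = (χ E && χ F)) ∧
  (∀ E : Set G, E ∉ ECoset σ → χ E = false)

/-- The filter of a character: the collection of elements of `ℰ` on which it is `1`. -/
def charFilter {G : Type*} (χ : Set G → Bool) : Set (Set G) := {E | χ E = true}

/-- A character is maximal if its filter is maximal with respect to inclusion. -/
def IsMaxChar {S G : Type*} [Monoid S] [Group G] (σ : S →* Monoid.End G)
    (χ : Set G → Bool) : Prop :=
  IsChar σ χ ∧ ∀ ω : Set G → Bool, IsChar σ ω → charFilter χ ⊆ charFilter ω →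
    charFilter ω = charFilter χ

/-- The boundary `∂Ê`: the closure of the set of maximal characters, inside the
character space `Ê`. -/
def Boundary {S G : Type*} [Monoid S] [Group G] (σ : S →* Monoid.End G) :
    Set (Set G → Bool) :=
  {χ | IsChar σ χ} ∩ closure {χ : Set G → Bool | IsMaxChar σ χ}

/-- `𝔉(χ)`: the filter on `𝒞` induced by a character `χ`, consisting of those
constructible subgroups `C` with `χ(gC) = 1` for some `g`. -/
def FilC {S G : Type*} [Monoid S] [Group G] (σ : S →* Monoid.End G)
    (χ : Set G → Bool) : Set (Subgroup G) :=
  {C | IsConstructible σ C ∧ ∃ g : G, χ (g • (C : Set G)) = true}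

/-- Translation of a character by a group element: `(t_k.χ)(E) = χ(k⁻¹E)`. -/
def charTranslate {G : Type*} [Group G] (k : G) (χ : Set G → Bool) : Set G → Bool :=
  fun E => χ (k⁻¹ • E)

theorem aux_closure {X : Type*} (A : Set (X → Bool)) (w : X → Bool) :
    w ∈ closure A ↔ ∀ I : Finset X, ∃ χ ∈ A, ∀ E ∈ I, χ E = w E := by
  rw [mem_closure_iff]
  constructor
  · intro h I
    have ho : IsOpen {χ : X → Bool | ∀ E ∈ I, χ E = w E} := by
      have : {χ : X → Bool | ∀ E ∈ I, χ E = w E} = Set.pi (I : Set X) (fun E => {w E}) := by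
        ext χ; simp [Set.pi]
      rw [this]
      exact isOpen_set_pi I.finite_toSet (fun _ _ => isOpen_discrete _)
    obtain ⟨χ, h1, h2⟩ := h _ ho (fun _ _ => rfl)
    exact ⟨χ, h2, h1⟩
  · intro h o ho hw
    obtain ⟨I, u, hu, hs⟩ := isOpen_pi_iff.1 ho w hw
    obtain ⟨χ, hA, hχ⟩ := h I
    refine ⟨χ, hs ?_, hA⟩
    intro E hE
    rw [hχ E hE]
    exact (hu E hE).2

section aux
variable {S G : Type*} [Monoid S] [Group G] {σ : S →* Monoid.End G}

theorem aux_inf (hinj : ∀ s : S, Function.Injective (σ s)) {C : Subgroup G}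
    (hC : IsConstructible σ C) : ∀ D : Subgroup G, IsConstructible σ D →
      IsConstructible σ (C ⊓ D) := by
  induction hC with
  | top => intro D hD; simpa using hD
  | map s C _ ih =>
    intro D hD
    have := IsConstructible.map s _ (ih _ (IsConstructible.comap s D hD))
    convert this using 1
    ext x
    simp only [Subgroup.mem_inf, Subgroup.mem_map, Subgroup.mem_comap]
    constructor
    · rintro ⟨⟨y, hy, rfl⟩, h⟩
      exact ⟨y, ⟨hy, h⟩, rfl⟩
    · rintro ⟨y, ⟨hy, h⟩, rfl⟩
      exact ⟨⟨y, hy, rfl⟩, h⟩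
  | comap s C _ ih =>
    intro D hD
    have := IsConstructible.comap s _ (ih _ (IsConstructible.map s D hD))
    convert this using 1
    ext x
    simp only [Subgroup.mem_inf, Subgroup.mem_map, Subgroup.mem_comap]
    constructor
    · rintro ⟨h, h'⟩
      exact ⟨h, x, h', rfl⟩
    · rintro ⟨h, y, hy, hyx⟩
      exact ⟨h, hinj s hyx ▸ hy⟩

theorem aux_coset_eq {g x : G} {C : Subgroup G} (h : x ∈ g • (C : Set G)) :
    g • (C : Set G) = x • (C : Set G) := by
  rw [Set.mem_smul_set_iff_inv_smul_mem] at h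
  exact (leftCoset_eq_iff C).2 h

theorem aux_E_inter (hinj : ∀ s : S, Function.Injective (σ s)) {E F : Set G}
    (hE : E ∈ ECoset σ) (hF : F ∈ ECoset σ) : E ∩ F ∈ ECoset σ := by
  rcases (E ∩ F).eq_empty_or_nonempty with h | ⟨x, hx, hx'⟩
  · exact Or.inl h
  rcases hE with rfl | ⟨g, C, hC, rfl⟩
  · exact absurd hx (by simp)
  rcases hF with rfl | ⟨g', D, hD, rfl⟩
  · exact absurd hx' (by simp)
  refine Or.inr ⟨x, C ⊓ D, aux_inf hinj hC D hD, ?_⟩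
  rw [aux_coset_eq hx, aux_coset_eq hx', Subgroup.coe_inf, Set.smul_set_inter]

theorem aux_mem {χ : Set G → Bool} (hχ : IsChar σ χ) {E : Set G} (h : χ E = true) :
    E ∈ ECoset σ := by
  by_contra hc
  simp [hχ.2.2.2 E hc] at h

theorem aux_nonempty {χ : Set G → Bool} (hχ : IsChar σ χ) {E : Set G} (h : χ E = true) :
    E.Nonempty := by
  rw [Set.nonempty_iff_ne_empty]
  rintro rfl
  simp [hχ.1] at h

theorem aux_inter {χ : Set G → Bool} (hχ : IsChar σ χ) {E F : Set G} (h : χ E = true)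
    (h' : χ F = true) : χ (E ∩ F) = true := by
  rw [hχ.2.2.1 E F (aux_mem hχ h) (aux_mem hχ h'), h, h']; rfl

theorem aux_mono {χ : Set G → Bool} (hχ : IsChar σ χ) {E F : Set G} (h : χ E = true)
    (hF : F ∈ ECoset σ) (hEF : E ⊆ F) : χ F = true := by
  have := hχ.2.2.1 E F (aux_mem hχ h) hF
  rw [Set.inter_eq_left.2 hEF, h] at this
  simpa using this.symm

theorem aux_fin {ι : Type*} {χ : Set G → Bool} (hχ : IsChar σ χ) (I : Finset ι)
    (f : ι → Set G) (h : ∀ i ∈ I, χ (f i) = true) : χ (⋂ i ∈ I, f i) = true := by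
  classical
  induction I using Finset.induction_on with
  | empty => simpa using hχ.2.1
  | insert a s _ ih =>
    rw [Finset.set_biInter_insert]
    exact aux_inter hχ (h a (Finset.mem_insert_self _ _))
      (ih fun i hi => h i (Finset.mem_insert_of_mem hi))

theorem aux_max (hinj : ∀ s : S, Function.Injective (σ s)) {χ : Set G → Bool}
    (hχ : IsMaxChar σ χ) {F : Set G} (hF : F ∈ ECoset σ) (h : χ F = false) :
    ∃ E, χ E = true ∧ E ∩ F = ∅ := by
  classical
  by_contra hc
  push Not at hc
  obtain ⟨hch, hmax⟩ := hχ
  let w : Set G → Bool := fun E => decide (E ∈ ECoset σ ∧ ∃ E', χ E' = true ∧ E' ∩ F ⊆ E)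
  have hw : ∀ E, w E = true ↔ (E ∈ ECoset σ ∧ ∃ E', χ E' = true ∧ E' ∩ F ⊆ E) := by
    intro E; simp [w]
  have hwc : IsChar σ w := by
    refine ⟨?_, ?_, ?_, ?_⟩
    · rw [Bool.eq_false_iff, ne_eq, hw]
      rintro ⟨_, E', h1, h2⟩
      exact (hc E' h1).ne_empty (Set.subset_empty_iff.1 h2)
    · rw [hw]
      exact ⟨aux_mem hch hch.2.1, Set.univ, hch.2.1, Set.subset_univ _⟩
    · intro E E' hE hE'
      rw [Bool.eq_iff_iff, Bool.and_eq_true, hw, hw, hw]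
      constructor
      · rintro ⟨_, A, hA, hs⟩
        exact ⟨⟨hE, A, hA, hs.trans Set.inter_subset_left⟩,
          ⟨hE', A, hA, hs.trans Set.inter_subset_right⟩⟩
      · rintro ⟨⟨_, A, hA, hs⟩, ⟨_, B, hB, hs'⟩⟩
        exact ⟨aux_E_inter hinj hE hE', A ∩ B, aux_inter hch hA hB,
          fun x hx => ⟨hs ⟨hx.1.1, hx.2⟩, hs' ⟨hx.1.2, hx.2⟩⟩⟩
    · intro E hE
      rw [Bool.eq_false_iff, ne_eq, hw]
      exact fun h => hE h.1
  have heq := hmax w hwc (fun E hE => (hw E).2 ⟨aux_mem hch hE, E, hE, Set.inter_subset_left⟩)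
  have : F ∈ charFilter w := (hw F).2 ⟨hF, Set.univ, hch.2.1, Set.inter_subset_right⟩
  rw [heq] at this
  have h2 : χ F = true := this
  simp [h] at h2

theorem aux_tight (hinj : ∀ s : S, Function.Injective (σ s)) {w : Set G → Bool}
    (hw : w ∈ Boundary σ) {A : Set G} (hA : w A = true) (I : Finset (Set G))
    (hI : ∀ E ∈ I, E ∈ ECoset σ ∧ w E = false) : ∃ x ∈ A, ∀ E ∈ I, x ∉ E := by
  classical
  obtain ⟨χ, hχ, hE⟩ := (aux_closure _ _).1 hw.2 (insert A I)
  have hA' : χ A = true := (hE A (Finset.mem_insert_self _ _)).trans hA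
  have h1 : ∀ E : Set G, ∃ E', χ E' = true ∧ (E ∈ I → E' ∩ E = ∅) := by
    intro E
    by_cases h : E ∈ I
    · obtain ⟨E', h1, h2⟩ := aux_max hinj hχ (hI E h).1
        ((hE E (Finset.mem_insert_of_mem h)).trans (hI E h).2)
      exact ⟨E', h1, fun _ => h2⟩
    · exact ⟨A, hA', fun h' => absurd h' h⟩
  choose f hf hf' using h1
  obtain ⟨x, hx, hx'⟩ := aux_nonempty hχ.1 (aux_inter hχ.1 hA' (aux_fin hχ.1 I f fun i _ => hf i))
  refine ⟨x, hx, fun E hEI hxE => ?_⟩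
  have : x ∈ f E ∩ E := ⟨Set.mem_iInter₂.1 hx' E hEI, hxE⟩
  rw [hf' E hEI] at this
  exact this

theorem aux_smul_mem (k : G) {E : Set G} (hE : E ∈ ECoset σ) : k • E ∈ ECoset σ := by
  rcases hE with rfl | ⟨g, C, hC, rfl⟩
  · exact Or.inl (by simp)
  · exact Or.inr ⟨k * g, C, hC, by rw [mul_smul]⟩

theorem aux_unique {χ : Set G → Bool} (hχ : IsChar σ χ) {E : Set G} {p q : G}
    (hp : χ (p • E) = true) (hq : χ (q • E) = true) : p • E = q • E := by
  have hE : E ∈ ECoset σ := by simpa using aux_smul_mem p⁻¹ (aux_mem hχ hp)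
  rcases hE with rfl | ⟨g, C, hC, rfl⟩
  · simp
  obtain ⟨x, hx, hx'⟩ := aux_nonempty hχ (aux_inter hχ hp hq)
  rw [← mul_smul] at hx hx' ⊢
  rw [← mul_smul, aux_coset_eq hx, aux_coset_eq hx']

end aux

/-- Proposition 4.7 (prop:A-ClosureVSunion-closed): for `𝔛 ⊆ ∂Ê` and `ω ∈ ∂Ê`,
`ω` lies in the closure of `{t_k.χ : k ∈ G, χ ∈ 𝔛}` if and only if
`𝔉(ω) ⊆ ⋃_{χ ∈ 𝔛} 𝔉(χ)`. -/
theorem closure_of_translates {S G : Type*} [Monoid S] [Group G] [Nontrivial G]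
    (σ : S →* Monoid.End G)
    (hinj : ∀ s : S, Function.Injective (σ s))
    (hfaith : Function.Injective σ)
    (hna : ∃ s : S, Set.range (σ s : G → G) ≠ Set.univ)
    (𝔛 : Set (Set G → Bool)) (h𝔛 : 𝔛 ⊆ Boundary σ)
    (ω : Set G → Bool) (hω : ω ∈ Boundary σ) :
    ω ∈ closure {χ' : Set G → Bool | ∃ (k : G) (χ : Set G → Bool),
        χ ∈ 𝔛 ∧ χ' = charTranslate k χ} ↔
      FilC σ ω ⊆ ⋃ χ ∈ 𝔛, FilC σ χ := by
  classical
  constructor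
  · rintro h C ⟨hC, g, hg⟩
    obtain ⟨_, ⟨k, χ, hχ, rfl⟩, hI⟩ := (aux_closure _ _).1 h {g • (C : Set G)}
    have h1 := (hI _ (Finset.mem_singleton_self _)).trans hg
    refine Set.mem_iUnion₂.2 ⟨χ, hχ, hC, k⁻¹ * g, ?_⟩
    rw [mul_smul]
    exact h1
  · intro h
    rw [aux_closure]
    intro I
    have hA := aux_fin hω.1 (I.filter fun E => ω E = true) id
      (fun i hi => (Finset.mem_filter.1 hi).2)
    set A : Set G := ⋂ i ∈ I.filter (fun E => ω E = true), id i with hAdef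
    obtain ⟨x, hxA, hx⟩ := aux_tight hinj hω hA
      (I.filter fun E => E ∈ ECoset σ ∧ ω E = false) (fun E hE => (Finset.mem_filter.1 hE).2)
    have hAE : A ∈ ECoset σ := aux_mem hω.1 hA
    rcases hAE with hAE | ⟨g, C, hC, hAE⟩
    · rw [hAE] at hxA; exact absurd hxA (by simp)
    obtain ⟨χ, hχX, -, g', hg'⟩ := Set.mem_iUnion₂.1 (h ⟨hC, g, hAE ▸ hA⟩)
    have hχ : IsChar σ χ := (h𝔛 hχX).1
    have h1 : ∀ E : Set G, ∃ E' : Set G, χ E' = true ∧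
        ∀ p : G, χ (p • E) = true → E' = p • E := by
      intro E
      by_cases hp : ∃ p : G, χ (p • E) = true
      · obtain ⟨p, hp⟩ := hp
        exact ⟨p • E, hp, fun q hq => aux_unique hχ hp hq⟩
      · exact ⟨Set.univ, hχ.2.1, fun q hq => absurd ⟨q, hq⟩ hp⟩
    choose f hf hf' using h1
    obtain ⟨y, hy, hy'⟩ := aux_nonempty hχ (aux_inter hχ hg' (aux_fin hχ I f fun i _ => hf i))
    refine ⟨_, ⟨x * y⁻¹, χ, hχX, rfl⟩, ?_⟩
    intro E hE
    show χ ((x * y⁻¹)⁻¹ • E) = ω E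
    by_cases hEC : E ∈ ECoset σ
    swap
    · rw [hω.1.2.2.2 E hEC]
      refine hχ.2.2.2 _ fun hc => hEC ?_
      have h3 := aux_smul_mem (x * y⁻¹) hc
      rwa [smul_inv_smul] at h3
    cases hb : ω E with
    | true =>
      have hAsub : A ⊆ E := Set.biInter_subset_of_mem (s := {i | i ∈ I.filter (fun E => ω E = true)})
        (t := id) (Finset.mem_filter.2 ⟨hE, hb⟩)
      refine aux_mono hχ hg' (aux_smul_mem _ hEC) ?_
      rw [aux_coset_eq hy]
      rw [hAE] at hxA
      have e : y • (C : Set G) = (x * y⁻¹)⁻¹ • A := by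
        rw [hAE, aux_coset_eq hxA, ← mul_smul]; simp
      rw [e]
      exact Set.smul_set_mono hAsub
    | false =>
      rw [Bool.eq_false_iff]
      intro hc
      have h2 : y ∈ f E := Set.mem_iInter₂.1 hy' E hE
      rw [hf' E _ hc, Set.mem_smul_set_iff_inv_smul_mem] at h2
      refine hx E (Finset.mem_filter.2 ⟨hE, hEC, hb⟩) ?_
      simpa using h2
end

section
/- Let σ: S ↷ G be an algebraic action. Assume that for all g, h ∈ G and all m ∈ ℤ_{>0}, g^m = h^m implies g = h, and assume σ satisfies the finite index property (FI): [G : σ_s(G)] < ∞ for all s ∈ S. Then I is 0-E-unitary: every φ ∈ I, for which there exists a nonempty S-constructible coset kD with kD ⊆ dom(φ) and φ|_{kD} = id_{kD}, satisfies φ = id_{dom(φ)}. In particular, I^e is E-unitary: every φ ∈ I^e that restricts to the identity on some C ∈ 𝒞 with C ⊆ dom(φ) equals id_{dom(φ)}. -/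
open scoped Pointwise

/-- Injective, functional, and closed under `p q⁻¹ r`. -/
def GoodRel_s11 {G : Type*} [Group G] (φ : Set (G × G)) : Prop :=
  (∀ x y z, (x, y) ∈ φ → (x, z) ∈ φ → y = z) ∧
  (∀ x y z, (x, z) ∈ φ → (y, z) ∈ φ → x = y) ∧
  (∀ a b c d e f, (a, b) ∈ φ → (c, d) ∈ φ → (e, f) ∈ φ → (a * c⁻¹ * e, b * d⁻¹ * f) ∈ φ)

theorem goodRel_of_mem {G : Type*} [Group G] (gens : Set (Set (G × G)))
    (h : ∀ φ ∈ gens, GoodRel_s11 φ) (φ : Set (G × G)) (hφ : MemInvSemigroup gens φ) :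
    GoodRel_s11 φ := by
  induction hφ with
  | base φ hm => exact h φ hm
  | comp φ ψ _ _ h1 h2 =>
    refine ⟨?_, ?_, ?_⟩
    · rintro x y z ⟨u, hu, hu'⟩ ⟨v, hv, hv'⟩
      obtain rfl := h2.1 _ _ _ hu hv
      exact h1.1 _ _ _ hu' hv'
    · rintro x y z ⟨u, hu, hu'⟩ ⟨v, hv, hv'⟩
      obtain rfl := h1.2.1 _ _ _ hu' hv'
      exact h2.2.1 _ _ _ hu hv
    · rintro a b c d e f ⟨u, hu, hu'⟩ ⟨v, hv, hv'⟩ ⟨w, hw, hw'⟩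
      exact ⟨_, h2.2.2 _ _ _ _ _ _ hu hv hw, h1.2.2 _ _ _ _ _ _ hu' hv' hw'⟩
  | inv φ _ h1 =>
    exact ⟨fun x y z a b => h1.2.1 _ _ _ a b, fun x y z a b => h1.1 _ _ _ a b,
      fun a b c d e f p q r => h1.2.2 _ _ _ _ _ _ p q r⟩

theorem goodRel_hom {G : Type*} [Group G] (f : G →* G) (hf : Function.Injective f) :
    GoodRel_s11 (grph (f : G → G)) := by
  refine ⟨?_, ?_, ?_⟩
  · intro x y z h1 h2
    simp only [grph, Set.mem_ofPred_eq] at h1 h2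
    rw [h1, h2]
  · intro x y z h1 h2
    simp only [grph, Set.mem_ofPred_eq] at h1 h2
    exact hf (h1.symm.trans h2)
  · intro a b c d e g h1 h2 h3
    simp only [grph, Set.mem_ofPred_eq] at h1 h2 h3 ⊢
    simp [h1, h2, h3]

theorem goodRel_trans {G : Type*} [Group G] (g : G) :
    GoodRel_s11 (grph (fun h : G => g * h)) := by
  refine ⟨?_, ?_, ?_⟩
  · intro x y z h1 h2
    simp only [grph, Set.mem_ofPred_eq] at h1 h2
    rw [h1, h2]
  · intro x y z h1 h2
    simp only [grph, Set.mem_ofPred_eq] at h1 h2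
    exact mul_left_cancel (h1.symm.trans h2)
  · intro a b c d e f h1 h2 h3
    simp only [grph, Set.mem_ofPred_eq] at h1 h2 h3 ⊢
    rw [h1, h2, h3]
    group

theorem index_of_constructible {S G : Type*} [Monoid S] [Group G]
    (σ : S →* Monoid.End G)
    (hinj : ∀ s : S, Function.Injective (σ s))
    (hFI : ∀ s : S, (MonoidHom.range (σ s : G →* G)).index ≠ 0)
    (D : Subgroup G) (hD : IsConstructible σ D) : D.index ≠ 0 := by
  induction hD with
  | top => simp
  | map s C _ ih =>
    have h := Subgroup.index_map_of_injective C (f := (σ s : G →* G)) (hinj s)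
    exact h ▸ mul_ne_zero ih (hFI s)
  | comap s C _ ih =>
    have h := Subgroup.index_comap C (σ s : G →* G)
    intro h0
    have h1 : C.relIndex (MonoidHom.range (σ s : G →* G)) = 0 := h.symm.trans h0
    have h2 := Subgroup.relIndex_eq_zero_of_le_right le_top h1
    rw [Subgroup.relIndex_top_right] at h2
    exact ih h2

theorem eq_idOn_of_good {G : Type*} [Group G]
    (hroots : ∀ (g h : G) (m : ℕ), 0 < m → g ^ m = h ^ m → g = h)
    (φ : Set (G × G)) (hφ : GoodRel_s11 φ) (k : G) (D : Subgroup G) (hD : D.index ≠ 0)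
    (h : ∀ d ∈ D, (k * d, k * d) ∈ φ) : φ = idOn (rdom φ) := by
  have key : ∀ x y, (x, y) ∈ φ → x = y := by
    intro x y hxy
    have hk : (k, k) ∈ φ := by simpa using h 1 D.one_mem
    obtain ⟨m, hm, _, hmD⟩ := Subgroup.exists_pow_mem_of_index_ne_zero hD (k⁻¹ * x)
    have hp : ∀ n : ℕ, (k * (k⁻¹ * x) ^ n, k * (k⁻¹ * y) ^ n) ∈ φ := by
      intro n
      induction n with
      | zero => simpa using hk
      | succ n ih =>
        have := hφ.2.2 _ _ _ _ _ _ ih hk hxy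
        simpa [pow_succ, mul_assoc] using this
    have h1 := mul_left_cancel (hφ.1 _ _ _ (h _ hmD) (hp m))
    exact mul_left_cancel (hroots _ _ m hm h1)
  ext ⟨x, y⟩
  constructor
  · intro hxy
    exact ⟨key x y hxy, y, hxy⟩
  · rintro ⟨h1, z, hz⟩
    simp only at h1 hz
    have := key _ _ hz
    subst h1
    rwa [← this] at hz

/-- Proposition 7.5 (prop:(FI)to(JF)): if `G` has unique `m`-th roots
(`g^m = h^m ⟹ g = h`) and σ satisfies the finite index property (FI), then `I`
is 0-E-unitary; in particular `I^e` is E-unitary. -/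
theorem zero_E_unitary_of_FI {S G : Type*} [Monoid S] [Group G] [Nontrivial G]
    (σ : S →* Monoid.End G)
    (hinj : ∀ s : S, Function.Injective (σ s))
    (hfaith : Function.Injective σ)
    (hroots : ∀ (g h : G) (m : ℕ), 0 < m → g ^ m = h ^ m → g = h)
    (hFI : ∀ s : S, (MonoidHom.range (σ s : G →* G)).index ≠ 0) :
    (∀ φ : Set (G × G), memI σ φ →
        (∃ (k : G) (D : Subgroup G), IsConstructible σ D ∧ idOn (k • (D : Set G)) ⊆ φ) →
        φ = idOn (rdom φ)) ∧
    (∀ φ : Set (G × G), memIe σ φ →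
        (∃ C : Subgroup G, IsConstructible σ C ∧ idOn ((C : Subgroup G) : Set G) ⊆ φ) →
        φ = idOn (rdom φ)) := by
  refine ⟨?_, ?_⟩
  · rintro φ hφ ⟨k, D, hD, h⟩
    refine eq_idOn_of_good hroots φ (goodRel_of_mem _ ?_ φ hφ) k D
      (index_of_constructible σ hinj hFI D hD) ?_
    · rintro ψ (⟨s, rfl⟩ | ⟨g, rfl⟩)
      · exact goodRel_hom (σ s : G →* G) (hinj s)
      · exact goodRel_trans g
    · intro d hd
      exact h ⟨rfl, d, hd, rfl⟩
  · rintro φ hφ ⟨D, hD, h⟩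
    refine eq_idOn_of_good hroots φ (goodRel_of_mem _ ?_ φ hφ) 1 D
      (index_of_constructible σ hinj hFI D hD) ?_
    · rintro ψ ⟨s, rfl⟩
      exact goodRel_hom (σ s : G →* G) (hinj s)
    · intro d hd
      rw [one_mul]
      exact h ⟨rfl, hd⟩
end

section
/- If S is left reversible, i.e. sS ∩ tS ≠ ∅ for all s, t ∈ S, then every algebraic action σ: S ↷ G satisfies condition (PC): for every C ∈ 𝒞 there exists s ∈ S with σ_s(G) ⊆ C. -/
open scoped Pointwise

/-- Proposition 8.10 (prop:exactness4Sreversible): if `S` is left reversible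
(`sS ∩ tS ≠ ∅` for all `s, t ∈ S`), then every algebraic action `σ : S ↷ G`
satisfies condition (PC): every constructible subgroup contains some `σ_s(G)`. -/
theorem PC_of_left_reversible {S G : Type*} [Monoid S] [Group G] [Nontrivial G]
    (σ : S →* Monoid.End G)
    (hinj : ∀ s : S, Function.Injective (σ s))
    (hfaith : Function.Injective σ)
    (hrev : ∀ s t : S, ∃ u v : S, s * u = t * v) :
    ∀ C : Subgroup G, IsConstructible σ C →
      ∃ s : S, Set.range (σ s : G → G) ⊆ (C : Set G) := by
  intro C hC
  induction hC with
  | top => exact ⟨1, fun x _ => Subgroup.mem_top x⟩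
  | map s C _ ih =>
    obtain ⟨t, ht⟩ := ih
    refine ⟨s * t, ?_⟩
    rintro _ ⟨g, rfl⟩
    rw [map_mul]
    exact ⟨σ t g, ht ⟨g, rfl⟩, rfl⟩
  | comap s C _ ih =>
    obtain ⟨t, ht⟩ := ih
    obtain ⟨u, v, huv⟩ := hrev s t
    refine ⟨u, ?_⟩
    rintro _ ⟨g, rfl⟩
    have h : σ s (σ u g) = σ t (σ v g) := by
      have := congrArg (fun x => σ x g) huv
      simp only [map_mul] at this
      exact this
    change σ s (σ u g) ∈ C
    rw [h]
    exact ht ⟨σ v g, rfl⟩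
end

section
/- Assume G is abelian, S is cancellative and right reversible (Ss ∩ St ≠ ∅ for all s, t ∈ S), and the algebraic action σ: S ↷ G is faithful and satisfies condition (PC): for every C ∈ 𝒞 there exists r ∈ S with σ_r(G) ⊆ C. Then for all C ∈ 𝒞 and all s, t ∈ S: if σ_s(g) = σ_t(g) for every g ∈ C, then s = t. (This is the condition characterizing property (JF) for the canonical globalization ⟨S⟩ ↷ S⁻¹G.) -/
open scoped Pointwise

/-- Corollary 8.14 (cor:(JF)4Sreversible): if `G` is abelian, `S` is cancellative
and right reversible, and the faithful algebraic action `σ : S ↷ G` satisfies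
(PC), then for every constructible subgroup `C` and all `s, t ∈ S`, agreement
of `σ_s` and `σ_t` on `C` forces `s = t` (the condition characterizing (JF) for
the canonical globalization). -/
theorem JF_of_right_reversible {S G : Type*} [Monoid S] [CommGroup G] [Nontrivial G]
    (σ : S →* Monoid.End G)
    (hinj : ∀ s : S, Function.Injective (σ s))
    (hfaith : Function.Injective σ)
    (hlc : ∀ a b c : S, a * b = a * c → b = c)
    (hrc : ∀ a b c : S, b * a = c * a → b = c)
    (hrev : ∀ s t : S, ∃ u v : S, u * s = v * t)
    (hPC : ∀ C : Subgroup G, IsConstructible σ C →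
      ∃ r : S, Set.range (σ r : G → G) ⊆ (C : Set G)) :
    ∀ C : Subgroup G, IsConstructible σ C →
      ∀ s t : S, (∀ g ∈ C, σ s g = σ t g) → s = t := by
  intro C hC s t h
  obtain ⟨r, hr⟩ := hPC C hC
  apply hrc r
  apply hfaith
  ext g
  rw [map_mul, map_mul]
  exact h (σ r g) (hr ⟨g, rfl⟩)
end

section
/- Let R be a commutative Noetherian integral domain (with 0 ≠ 1) and S ⊆ R ∖ {0} a multiplicative submonoid containing 1. Then the algebraic action of S on the additive group (R, +) by the injective endomorphisms x ↦ ax (a ∈ S) is exact — since S is commutative, this means precisely that ⋂_{a ∈ S} aR = {0} — if and only if S contains a non-unit of R. -/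
/-- Proposition 8.19 (prop:IDexact): for a Noetherian integral domain `R` and a
submonoid `S ⊆ R ∖ {0}`, the multiplication action `S ↷ (R, +)` is exact
(i.e. `⋂_{a ∈ S} aR = {0}`) if and only if `S` contains a non-unit. -/
theorem domain_action_exact_iff_nonunit {R : Type*} [CommRing R] [IsDomain R]
    [IsNoetherianRing R] (S : Submonoid R) (hS : ∀ a ∈ S, a ≠ (0 : R)) :
    (⋂ a ∈ (S : Set R), Set.range (fun x : R => a * x)) = {0} ↔
      ∃ a ∈ S, ¬IsUnit a := by
  constructor
  · intro h
    by_contra hc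
    push Not at hc
    have h1 : (1 : R) ∈ (⋂ a ∈ (S : Set R), Set.range (fun x : R => a * x)) := by
      simp only [Set.mem_iInter]
      intro a ha
      obtain ⟨b, hb⟩ := (hc a ha).exists_right_inv
      exact ⟨b, hb⟩
    rw [h] at h1
    exact one_ne_zero (Set.mem_singleton_iff.mp h1)
  · rintro ⟨a, ha, hu⟩
    ext y
    simp only [Set.mem_iInter, Set.mem_singleton_iff]
    constructor
    · intro hy
      have hI : Ideal.span {a} ≠ (⊤ : Ideal R) := by
        rwa [Ne, Ideal.span_singleton_eq_top]
      have h0 := Ideal.iInf_pow_eq_bot_of_isDomain (Ideal.span {a}) hI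
      have hm : y ∈ (⨅ i : ℕ, Ideal.span {a} ^ i : Ideal R) := by
        rw [Ideal.mem_iInf]
        intro i
        rw [Ideal.span_singleton_pow, Ideal.mem_span_singleton]
        obtain ⟨x, hx⟩ := hy (a ^ i) (S.pow_mem ha i)
        exact ⟨x, hx.symm⟩
      rw [h0] at hm
      simpa using hm
    · rintro rfl b _
      exact ⟨0, mul_zero b⟩
end

section
/- Let R be a commutative Noetherian ring, M a finitely generated nonzero R-module, and S ⊆ R ∖ ⋃_{𝔭 ∈ Asc(M)} 𝔭 a multiplicative submonoid. Then the following are equivalent: (i) there exists a ∈ S such that ⋂_{n ≥ 0} aⁿM = 0 (i.e. the action of the submonoid {aⁿ : n ∈ ℕ} on M is exact); (ii) ⋂_{a ∈ S} aM = 0 (i.e. the action of S on M is exact); (iii) for every 𝔭 ∈ Asc(M), there exists a ∈ S whose image in the integral domain R/𝔭 is not a unit (i.e. the action of S on R/𝔭 is exact). -/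
/-- Proposition 8.24 (prop:Noetherexact): for a commutative Noetherian ring `R`,
a finitely generated nonzero `R`-module `M`, and a submonoid
`S ⊆ R ∖ ⋃_{𝔭 ∈ Asc(M)} 𝔭`, the following are equivalent:
(i) some `a ∈ S` acts exactly on `M` (`⋂ₙ aⁿM = 0`);
(ii) the action of `S` on `M` is exact (`⋂_{a ∈ S} aM = 0`);
(iii) for every associated prime `𝔭` of `M` there is `a ∈ S` whose image in
`R/𝔭` is not a unit. -/
theorem exactness_characterization_modules {R M : Type*} [CommRing R]
    [IsNoetherianRing R] [AddCommGroup M] [Module R M] [Module.Finite R M]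
    [Nontrivial M]
    (S : Submonoid R)
    (hS : ∀ a ∈ S, ∀ p ∈ associatedPrimes R M, a ∉ p) :
    List.TFAE [
      (∃ a ∈ S, (⋂ n : ℕ, Set.range (fun x : M => a ^ n • x)) = {0}),
      ((⋂ a ∈ (S : Set R), Set.range (fun x : M => a • x)) = {0}),
      (∀ p ∈ associatedPrimes R M, ∃ a ∈ S, ¬IsUnit (Ideal.Quotient.mk p a))] := by
  tfae_have 1 → 2 := by
    rintro ⟨a, ha, h⟩
    apply Set.Subset.antisymm
    · rw [← h]
      intro x hx
      simp only [Set.mem_iInter] at hx ⊢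
      exact fun n => hx (a ^ n) (S.pow_mem ha n)
    · rintro _ rfl
      simp only [Set.mem_iInter]
      exact fun b _ => ⟨0, smul_zero b⟩
  tfae_have 2 → 3 := by
    intro h p hp
    by_contra! hc
    obtain ⟨hpr, x, hx⟩ := isAssociatedPrime_iff_exists_injective_linearMap p M |>.1 hp |> fun ⟨h1, f, hf⟩ =>
      (⟨h1, f 1, fun r => by
        rw [← f.map_smul, map_eq_zero_iff f hf, Algebra.smul_def, mul_one]
        exact Ideal.Quotient.eq_zero_iff_mem⟩ : p.IsPrime ∧ ∃ x : M, ∀ r, r • x = 0 ↔ r ∈ p)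
    have hx0 : x ∈ ({0} : Set M) := by
      rw [← h]
      simp only [Set.mem_iInter]
      intro a ha
      obtain ⟨b, hb⟩ := (hc a ha).exists_right_inv
      obtain ⟨b, rfl⟩ := Ideal.Quotient.mk_surjective b
      rw [← map_mul, ← map_one (Ideal.Quotient.mk p), Ideal.Quotient.eq, ← hx, sub_smul, one_smul,
        sub_eq_zero, mul_smul] at hb
      exact ⟨b • x, hb⟩
    apply hpr.ne_top
    rw [Ideal.eq_top_iff_one, ← hx, one_smul]
    exact hx0
  tfae_have 3 → 1 := by
    intro h
    choose! f hfS hf using h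
    have hfin : (associatedPrimes R M).Finite := associatedPrimes.finite R M
    have haS : ∏ p ∈ hfin.toFinset, f p ∈ S :=
      S.prod_mem fun p hp => hfS p (hfin.mem_toFinset.1 hp)
    refine ⟨_, haS, ?_⟩
    have hdvd : ∀ p ∈ associatedPrimes R M, f p ∣ ∏ p ∈ hfin.toFinset, f p :=
      fun p hp => Finset.dvd_prod_of_mem f (hfin.mem_toFinset.2 hp)
    generalize ∏ p ∈ hfin.toFinset, f p = a at *
    apply Set.Subset.antisymm
    · intro x hx
      by_contra hx0
      have hx0 : x ≠ 0 := hx0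
      have hmem : x ∈ (⨅ i : ℕ, (Ideal.span {a}) ^ i • ⊤ : Submodule R M) := by
        simp only [Set.mem_iInter] at hx
        rw [Submodule.mem_iInf]
        intro n
        obtain ⟨y, rfl⟩ := hx n
        exact Submodule.smul_mem_smul
          (Ideal.pow_mem_pow (Ideal.mem_span_singleton_self a) n) trivial
      obtain ⟨⟨r, hr⟩, hrx⟩ := (Ideal.mem_iInf_smul_pow_eq_bot_iff _ x).1 hmem
      obtain ⟨b, rfl⟩ := Ideal.mem_span_singleton'.1 hr
      have hz : (1 - b * a) ∈ ⋃ p ∈ associatedPrimes R M, (p : Set R) := by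
        rw [biUnion_associatedPrimes_eq_zero_divisors]
        exact ⟨x, hx0, by rw [sub_smul, one_smul, sub_eq_zero]; exact hrx.symm⟩
      simp only [Set.mem_iUnion] at hz
      obtain ⟨p, hp, hz⟩ := hz
      apply hf p hp
      apply isUnit_of_dvd_unit (map_dvd _ (hdvd p hp))
      refine IsUnit.of_mul_eq_one (Ideal.Quotient.mk p b) ?_
      rw [mul_comm, ← map_mul, ← map_one (Ideal.Quotient.mk p), eq_comm, Ideal.Quotient.eq]
      exact hz
    · rintro _ rfl
      simp only [Set.mem_iInter]
      exact fun n => ⟨0, smul_zero _⟩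
  tfae_finish
end

section
/- Let S be a left cancellative monoid containing a non-invertible element and let Σ be a nontrivial group, and let σ: S ↷ ⊕_S Σ be the full S-shift. Then the family 𝒞 of S-constructible subgroups of ⊕_S Σ equals {⊕_X Σ : X ∈ 𝒥_S}, and the map 𝒥_S → 𝒞, X ↦ ⊕_X Σ, is an isomorphism of semilattices: it is a bijection satisfying ⊕_{X ∩ Y} Σ = (⊕_X Σ) ∩ (⊕_Y Σ) for all X, Y ∈ 𝒥_S. -/
/-- The direct sum `⊕_S A`: the subgroup of the full product `S → A` consisting
of finitely supported elements. -/
def FinMulSupport (S A : Type*) [Group A] : Subgroup (S → A) where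
  carrier := {x | (Function.mulSupport x).Finite}
  one_mem' := by simp
  mul_mem' := by
    intro x y hx hy
    exact (hx.union hy).subset (Function.mulSupport_mul x y)
  inv_mem' := by
    intro x hx
    simpa [Function.mulSupport_inv] using hx

open Classical in
/-- The shift `σ_s` on functions `S → A`:
`(σ_s x)_t = x_{s'}` if `t = s * s'` (with `s'` unique by left cancellation),
and `(σ_s x)_t = 1` otherwise. -/
noncomputable def shiftFun {S A : Type*} [Monoid S] [Group A] (s : S) (x : S → A) :
    S → A :=
  fun t => if h : ∃ s' : S, t = s * s' then x h.choose else 1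

/-- The full `S`-shift `σ_s` on `⊕_S A`. -/
noncomputable def shiftG {S A : Type*} [Monoid S] [Group A] (s : S)
    (x : FinMulSupport S A) : FinMulSupport S A :=
  ⟨shiftFun s (x : S → A), by
    apply Set.Finite.subset (Set.Finite.image (fun s' => s * s') x.2)
    intro t ht
    rw [Function.mem_mulSupport] at ht
    by_cases h : ∃ s' : S, t = s * s'
    · refine ⟨h.choose, ?_, h.choose_spec.symm⟩
      rw [Function.mem_mulSupport]
      intro h0
      apply ht
      simp only [shiftFun, dif_pos h, h0]
    · exact absurd (by simp only [shiftFun, dif_neg h]) ht⟩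

/-- The family of `S`-constructible subsets for an action given by functions
`f s : G → G`: smallest family containing `G` and closed under images and
preimages. (For the full shift these are exactly the constructible subgroups.) -/
inductive IsConstructibleSet {S G : Type*} (f : S → G → G) : Set G → Prop
  | univ : IsConstructibleSet f Set.univ
  | img : ∀ (s : S) (C : Set G), IsConstructibleSet f C → IsConstructibleSet f (f s '' C)
  | preimg : ∀ (s : S) (C : Set G), IsConstructibleSet f C →
      IsConstructibleSet f (f s ⁻¹' C)

/-- The family `𝒥_S` of constructible right ideals of `S`: smallest family of
subsets of `S` containing `S` and closed under `X ↦ sX` and `X ↦ s⁻¹X`. -/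
inductive IsConstructibleIdeal {S : Type*} [Monoid S] : Set S → Prop
  | univ : IsConstructibleIdeal Set.univ
  | smul : ∀ (s : S) (X : Set S), IsConstructibleIdeal X →
      IsConstructibleIdeal ((fun t => s * t) '' X)
  | presmul : ∀ (s : S) (X : Set S), IsConstructibleIdeal X →
      IsConstructibleIdeal ((fun t => s * t) ⁻¹' X)

/-- `⊕_X A` inside `⊕_S A`: elements supported on `X`. -/
def oplus {S : Type*} (A : Type*) [Group A] (X : Set S) : Set (FinMulSupport S A) :=
  {x | ∀ t ∉ X, (x : S → A) t = 1}

theorem aux_shift_mul {S A : Type*} [LeftCancelMonoid S] [Group A] (s : S) (x : S → A) (t : S) :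
    shiftFun s x (s * t) = x t := by
  have h : ∃ s' : S, s * t = s * s' := ⟨t, rfl⟩
  have h2 : h.choose = t := (mul_left_cancel h.choose_spec).symm
  simp only [shiftFun, dif_pos h, h2]

theorem aux_shift_not {S A : Type*} [LeftCancelMonoid S] [Group A] (s : S) (x : S → A) (t : S)
    (h : ¬ ∃ s' : S, t = s * s') : shiftFun s x t = 1 := by
  simp only [shiftFun, dif_neg h]

theorem aux_univ {S A : Type*} [LeftCancelMonoid S] [Group A] :
    oplus A (Set.univ : Set S) = Set.univ := by
  ext x
  simp [oplus]

theorem aux_img {S A : Type*} [LeftCancelMonoid S] [Group A] (s : S) (X : Set S) :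
    shiftG s '' oplus A X = oplus A ((fun t => s * t) '' X) := by
  ext y
  constructor
  · rintro ⟨x, hx, rfl⟩ t ht
    change shiftFun s (x : S → A) t = 1
    by_cases h : ∃ s' : S, t = s * s'
    · obtain ⟨u, rfl⟩ := h
      rw [aux_shift_mul]
      exact hx u (fun hu => ht ⟨u, hu, rfl⟩)
    · exact aux_shift_not s _ t h
  · intro hy
    refine ⟨⟨fun t => (y : S → A) (s * t), ?_⟩, ?_, ?_⟩
    · exact Set.Finite.preimage (f := fun t => s * t)
        (fun a _ b _ hab => mul_left_cancel hab) y.2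
    · intro t ht
      apply hy
      rintro ⟨u, hu, hut⟩
      exact ht (mul_left_cancel hut ▸ hu)
    · apply Subtype.ext
      funext t
      change shiftFun s _ t = _
      by_cases h : ∃ s' : S, t = s * s'
      · obtain ⟨u, rfl⟩ := h
        rw [aux_shift_mul]
      · rw [aux_shift_not s _ t h]
        refine (hy t ?_).symm
        rintro ⟨u, -, hu⟩
        exact h ⟨u, hu.symm⟩

theorem aux_preimg {S A : Type*} [LeftCancelMonoid S] [Group A] (s : S) (X : Set S) :
    shiftG s ⁻¹' oplus A X = oplus A ((fun t => s * t) ⁻¹' X) := by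
  ext x
  constructor
  · intro hx t ht
    have := hx (s * t) ht
    change shiftFun s (x : S → A) (s * t) = 1 at this
    rwa [aux_shift_mul] at this
  · intro hx t ht
    change shiftFun s (x : S → A) t = 1
    by_cases h : ∃ s' : S, t = s * s'
    · obtain ⟨u, rfl⟩ := h
      rw [aux_shift_mul]
      exact hx u ht
    · exact aux_shift_not s _ t h

open Classical in
theorem aux_mono_s19 {S A : Type*} [Group A] [Nontrivial A] {X Y : Set S}
    (h : oplus A X ⊆ oplus A Y) : X ⊆ Y := by
  intro t ht
  by_contra hY
  obtain ⟨a, ha⟩ := exists_ne (1 : A)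
  have hm : (Pi.mulSingle t a : S → A) ∈ FinMulSupport S A :=
    (Set.finite_singleton t).subset Pi.mulSupport_mulSingle_subset
  have h1 : (⟨Pi.mulSingle t a, hm⟩ : FinMulSupport S A) ∈ oplus A X := by
    intro u hu
    have e : u ≠ t := by
      rintro rfl
      exact hu ht
    exact Pi.mulSingle_eq_of_ne (M := fun _ : S => A) e a
  have h2 := h h1 t hY
  exact ha (by simpa using h2)

/-- Proposition 9.2 (prop:Cforshift): for the full `S`-shift over a nontrivial
group `A` (with `S` left cancellative containing a non-invertible element),
the constructible subgroups of `⊕_S A` are exactly the subgroups `⊕_X A` for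
`X ∈ 𝒥_S`, and `X ↦ ⊕_X A` is an isomorphism of semilattices `𝒥_S ≅ 𝒞`. -/
theorem constructible_subgroups_of_full_shift {S A : Type*} [LeftCancelMonoid S]
    [Group A] [Nontrivial A] (hS : ∃ s : S, ¬IsUnit s) :
    ({C : Set (FinMulSupport S A) | IsConstructibleSet (shiftG (S := S) (A := A)) C} =
      {C | ∃ X : Set S, IsConstructibleIdeal X ∧ C = oplus A X}) ∧
    (∀ X Y : Set S, IsConstructibleIdeal X → IsConstructibleIdeal Y →
      oplus A X = oplus A Y → X = Y) ∧
    (∀ X Y : Set S, IsConstructibleIdeal X → IsConstructibleIdeal Y →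
      oplus A (X ∩ Y) = oplus A X ∩ oplus A Y) := by
  refine ⟨?_, ?_, ?_⟩
  · ext C
    constructor
    · intro hC
      induction hC with
      | univ => exact ⟨_, .univ, aux_univ.symm⟩
      | img s C _ ih =>
        obtain ⟨X, hX, rfl⟩ := ih
        exact ⟨_, .smul s X hX, aux_img s X⟩
      | preimg s C _ ih =>
        obtain ⟨X, hX, rfl⟩ := ih
        exact ⟨_, .presmul s X hX, aux_preimg s X⟩
    · rintro ⟨X, hX, rfl⟩
      change IsConstructibleSet _ _
      induction hX with
      | univ => rw [aux_univ]; exact .univ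
      | smul s X _ ih => rw [← aux_img]; exact .img s _ ih
      | presmul s X _ ih => rw [← aux_preimg]; exact .preimg s _ ih
  · intro X Y _ _ h
    exact Set.Subset.antisymm (aux_mono_s19 h.subset) (aux_mono_s19 h.symm.subset)
  · intro X Y _ _
    ext x
    constructor
    · intro hx
      exact ⟨fun t ht => hx t (fun h => ht h.1), fun t ht => hx t (fun h => ht h.2)⟩
    · rintro ⟨h1, h2⟩ t ht
      by_cases hX : t ∈ X
      · exact h2 t (fun hY => ht ⟨hX, hY⟩)
      · exact h1 t hX
end
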